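/- (Theorem 1, coefficient form.) Let b_1, …, b_m be a δ-LLL-reduced basis of a full-rank lattice L in ℝ^m, define α_0 = 1 and α_i = (δ − 1/4)^i + (1/2)·Σ_{k=0}^{i−1} α_k for i ≥ 1, and let v_0 be a shortest nonzero vector of L, written as v_0 = Σ_{i=1}^{m} c_i b_i with integer coefficients c_i. Then |c_{m−i}| ≤ α_i · (δ − 1/4)^{1−m} for all i = 0, 1, …, m−1; consequently an encoding in which the (m−i)-th coefficient ranges over all integers of absolute value at most α_i·(δ − 1/4)^{1−m} is capable of representing the shortest nonzero vector of the lattice. -/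

import Mathlib

open Finset
open scoped RealInnerProductSpace

/-! Pairing `v = ∑ cⱼ bⱼ` with the `k`-th Gram–Schmidt vector `b̃ₖ` only sees the indices
`j ≥ k`, so by Cauchy–Schwarz `|cₖ + ∑_{j > k} μₖⱼ cⱼ| ‖b̃ₖ‖ ≤ ‖v‖`. For an LLL-reduced family
`‖b̃ₖ‖` is at least `(δ - 1/4) ^ k ‖b₀‖`, and a shortest vector satisfies `‖v‖ ≤ ‖b₀‖`, so the sum
inside the absolute value is at most `(δ - 1/4) ^ (-k)` in size. Since `|μₖⱼ| ≤ 1/2`, each `|cₖ|` is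
bounded by this plus half the sum of the later `|cⱼ|`; up to the factor `(δ - 1/4) ^ (1 - M)`, the
reversed sequence `α` solves that recursion with equality. -/

section GramSchmidt

open InnerProductSpace (gramSchmidt)

variable (𝕜 : Type*) {E ι : Type*} [RCLike 𝕜] [NormedAddCommGroup E] [InnerProductSpace 𝕜 E]
  [LinearOrder ι] [LocallyFiniteOrderBot ι]

/-- The Gram–Schmidt coefficient `μ_{j,i} = ⟨b̃ⱼ, bᵢ⟩ / ‖b̃ⱼ‖²` of `b`, with the index of the
orthogonalized vector first. It is `0` where `b̃ⱼ = 0`. -/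
noncomputable def gramSchmidtCoeff [WellFoundedLT ι] (b : ι → E) (j i : ι) : 𝕜 :=
  inner 𝕜 (gramSchmidt 𝕜 b j) (b i) / (‖gramSchmidt 𝕜 b j‖ : 𝕜) ^ 2

variable {𝕜} in
theorem eq_gramSchmidt_of_recurrence [WellFoundedLT ι] {b bt : ι → E} {μ : ι → ι → 𝕜}
    (hμ : ∀ i j, j < i → μ j i = inner 𝕜 (bt j) (b i) / (‖bt j‖ : 𝕜) ^ 2)
    (hbt : ∀ i, bt i = b i - ∑ j ∈ Iio i, μ j i • bt j) :
    bt = gramSchmidt 𝕜 b := by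
  funext i
  induction i using WellFoundedLT.induction with
  | ind i ih =>
    rw [hbt, sub_eq_iff_eq_add]
    nth_rw 1 [InnerProductSpace.gramSchmidt_def'' 𝕜 b i]
    congr 1
    refine sum_congr rfl fun j hj => ?_
    have hji : j < i := mem_Iio.mp hj
    rw [hμ i j hji, ih j hji]

theorem inner_gramSchmidt_self_right [WellFoundedLT ι] (b : ι → E) (k : ι) :
    inner 𝕜 (gramSchmidt 𝕜 b k) (b k) = (‖gramSchmidt 𝕜 b k‖ : 𝕜) ^ 2 := by
  have horth : ∀ j ∈ Iio k, inner 𝕜 (gramSchmidt 𝕜 b k) (gramSchmidt 𝕜 b j) = 0 := fun j hj =>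
    InnerProductSpace.gramSchmidt_orthogonal 𝕜 b (mem_Iio.mp hj).ne'
  nth_rw 1 [InnerProductSpace.gramSchmidt_def'' 𝕜 b k]
  rw [inner_add_right, inner_sum, sum_eq_zero, add_zero, inner_self_eq_norm_sq_to_K]
  intro j hj
  rw [inner_smul_right, horth j hj, mul_zero]

theorem gramSchmidtCoeff_mul_norm_sq [WellFoundedLT ι] (b : ι → E) (j i : ι) :
    gramSchmidtCoeff 𝕜 b j i * (‖gramSchmidt 𝕜 b j‖ : 𝕜) ^ 2 =
      inner 𝕜 (gramSchmidt 𝕜 b j) (b i) := by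
  rcases eq_or_ne (gramSchmidt 𝕜 b j) 0 with hj | hj
  · simp [hj]
  · exact div_mul_cancel₀ _ (by simpa using hj)

variable [Fintype ι] [LocallyFiniteOrderTop ι]

theorem inner_gramSchmidt_sum_smul (b : ι → E) (c : ι → 𝕜) (k : ι) :
    inner 𝕜 (gramSchmidt 𝕜 b k) (∑ j, c j • b j) =
      (c k + ∑ j ∈ Ioi k, c j * gramSchmidtCoeff 𝕜 b k j) * (‖gramSchmidt 𝕜 b k‖ : 𝕜) ^ 2 := by
  calc inner 𝕜 (gramSchmidt 𝕜 b k) (∑ j, c j • b j)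
      = ∑ j, c j * inner 𝕜 (gramSchmidt 𝕜 b k) (b j) := by
        simp only [inner_sum, inner_smul_right]
    _ = ∑ j ∈ Ici k, c j * inner 𝕜 (gramSchmidt 𝕜 b k) (b j) := by
        refine (sum_subset (subset_univ _) fun j _ hj => ?_).symm
        have hjk : j < k := by simpa only [mem_Ici, not_le] using hj
        rw [InnerProductSpace.gramSchmidt_inv_triangular 𝕜 b hjk, mul_zero]
    _ = _ := by
        rw [Ici_eq_cons_Ioi, sum_cons, inner_gramSchmidt_self_right, add_mul, sum_mul]
        simp only [mul_assoc, gramSchmidtCoeff_mul_norm_sq]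

theorem norm_add_sum_mul_norm_gramSchmidt_le (b : ι → E) (c : ι → 𝕜) (k : ι) :
    ‖c k + ∑ j ∈ Ioi k, c j * gramSchmidtCoeff 𝕜 b k j‖ * ‖gramSchmidt 𝕜 b k‖ ≤
      ‖∑ j, c j • b j‖ := by
  rcases (norm_nonneg (gramSchmidt 𝕜 b k)).eq_or_lt with hk | hk
  · simp [← hk]
  refine le_of_mul_le_mul_left ?_ hk
  have hCS := norm_inner_le_norm (𝕜 := 𝕜) (gramSchmidt 𝕜 b k) (∑ j, c j • b j)
  rw [inner_gramSchmidt_sum_smul, norm_mul, norm_pow, RCLike.norm_ofReal, abs_norm] at hCS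
  linarith

end GramSchmidt

theorem le_of_le_add_mul_sum_Ioi {ι R : Type*} [Preorder ι] [LocallyFiniteOrderTop ι]
    [WellFoundedGT ι] [Semiring R] [PartialOrder R] [IsOrderedRing R] {f x y : ι → R} {r : R}
    (hr : 0 ≤ r) (hx : ∀ k, x k ≤ f k + r * ∑ j ∈ Ioi k, x j)
    (hy : ∀ k, f k + r * ∑ j ∈ Ioi k, y j ≤ y k) : x ≤ y := by
  intro k
  induction k using WellFoundedGT.induction with
  | ind k ih =>
    calc x k ≤ f k + r * ∑ j ∈ Ioi k, x j := hx k
      _ ≤ f k + r * ∑ j ∈ Ioi k, y j := by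
        gcongr with j hj
        exact ih j (mem_Ioi.mp hj)
      _ ≤ y k := hy k

theorem sum_Ioi_val_rev {A : Type*} [AddCommMonoid A] {M : ℕ} (f : ℕ → A) (k : Fin M) :
    ∑ j ∈ Ioi k, f j.rev = ∑ n ∈ range k.rev, f n := by
  rw [← Nat.Iio_eq_range, ← Fin.map_valEmbedding_Iio, ← Fin.map_revPerm_Ioi, sum_map, sum_map]
  rfl

section LLL

open InnerProductSpace (gramSchmidt)

variable {E : Type*} [NormedAddCommGroup E] [InnerProductSpace ℝ E] {M : ℕ} {δ : ℝ}
  {b : Fin M → E}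

/-- A `δ`-LLL-reduced family of vectors: size-reduced and satisfying the Lovász condition.
Linear independence is not part of the definition. -/
structure IsLLLReduced (δ : ℝ) (b : Fin M → E) : Prop where
  abs_coeff_le : ∀ i j, j < i → |gramSchmidtCoeff ℝ b j i| ≤ 1 / 2
  lovasz : ∀ (i : Fin M) (h : (i : ℕ) + 1 < M),
    (δ - gramSchmidtCoeff ℝ b i ⟨i + 1, h⟩ ^ 2) * ‖gramSchmidt ℝ b i‖ ^ 2 ≤
      ‖gramSchmidt ℝ b ⟨i + 1, h⟩‖ ^ 2

theorem isLLLReduced_of_recurrence {bt : Fin M → E} {μ : Fin M → Fin M → ℝ}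
    (hμ : ∀ i j, j < i → μ j i = ⟪b i, bt j⟫ / ⟪bt j, bt j⟫)
    (hbt : ∀ i, bt i = b i - ∑ j ∈ Iio i, μ j i • bt j)
    (hsize : ∀ i j, j < i → |μ j i| ≤ 1 / 2)
    (hLovasz : ∀ (i : Fin M) (h : (i : ℕ) + 1 < M),
      (δ - μ i ⟨i + 1, h⟩ ^ 2) * ‖bt i‖ ^ 2 ≤ ‖bt ⟨i + 1, h⟩‖ ^ 2) :
    IsLLLReduced δ b := by
  have hμ' : ∀ i j, j < i → μ j i = ⟪bt j, b i⟫ / ‖bt j‖ ^ 2 := fun i j hji => by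
    rw [hμ i j hji, real_inner_comm, real_inner_self_eq_norm_sq]
  obtain rfl : bt = gramSchmidt ℝ b := eq_gramSchmidt_of_recurrence hμ' hbt
  have hcoeff : ∀ i j, j < i → μ j i = gramSchmidtCoeff ℝ b j i := hμ'
  refine ⟨fun i j hji => hcoeff i j hji ▸ hsize i j hji, fun i h => ?_⟩
  rw [← hcoeff ⟨i + 1, h⟩ i (Fin.lt_def.mpr (Nat.lt_succ_self i))]
  exact hLovasz i h

namespace IsLLLReduced

theorem mul_norm_sq_le_norm_sq_succ (hb : IsLLLReduced δ b) (i : Fin M) (h : (i : ℕ) + 1 < M) :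
    (δ - 1 / 4) * ‖gramSchmidt ℝ b i‖ ^ 2 ≤ ‖gramSchmidt ℝ b ⟨i + 1, h⟩‖ ^ 2 := by
  have hsize : |gramSchmidtCoeff ℝ b i ⟨i + 1, h⟩| ≤ 1 / 2 :=
    hb.abs_coeff_le _ _ (Fin.lt_def.mpr (Nat.lt_succ_self i))
  have hcoeff : gramSchmidtCoeff ℝ b i ⟨i + 1, h⟩ ^ 2 ≤ (1 / 2) ^ 2 :=
    sq_le_sq.mpr (hsize.trans (le_abs_self _))
  refine le_trans ?_ (hb.lovasz i h)
  gcongr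
  linarith

theorem pow_mul_norm_sq_le (hb : IsLLLReduced δ b) (hδ : 1 / 4 ≤ δ) {i j : Fin M} (hij : i ≤ j) :
    (δ - 1 / 4) ^ (j - i : ℕ) * ‖gramSchmidt ℝ b i‖ ^ 2 ≤ ‖gramSchmidt ℝ b j‖ ^ 2 := by
  obtain ⟨j, hj⟩ := j
  have hij' : (i : ℕ) ≤ j := hij
  induction j, hij' using Nat.le_induction with
  | base => simp
  | succ j hij' ih =>
    calc (δ - 1 / 4) ^ (j + 1 - i) * ‖gramSchmidt ℝ b i‖ ^ 2
        = (δ - 1 / 4) * ((δ - 1 / 4) ^ (j - i) * ‖gramSchmidt ℝ b i‖ ^ 2) := by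
          rw [Nat.sub_add_comm hij', pow_succ', mul_assoc]
      _ ≤ (δ - 1 / 4) * ‖gramSchmidt ℝ b ⟨j, by omega⟩‖ ^ 2 :=
          mul_le_mul_of_nonneg_left (ih _ hij') (sub_nonneg.mpr hδ)
      _ ≤ ‖gramSchmidt ℝ b ⟨j + 1, hj⟩‖ ^ 2 := hb.mul_norm_sq_le_norm_sq_succ ⟨j, _⟩ hj

variable [NeZero M]

theorem pow_mul_norm_zero_le (hb : IsLLLReduced δ b) (hδ : 1 / 4 ≤ δ) (hδ' : δ ≤ 5 / 4)
    (k : Fin M) : (δ - 1 / 4) ^ (k : ℕ) * ‖b 0‖ ≤ ‖gramSchmidt ℝ b k‖ := by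
  have hβ : 0 ≤ δ - 1 / 4 := sub_nonneg.mpr hδ
  have hpow : (δ - 1 / 4) ^ (k : ℕ) ≤ 1 := pow_le_one₀ hβ (by linarith)
  have hzero : gramSchmidt ℝ b 0 = b 0 := by
    rw [InnerProductSpace.gramSchmidt_def, ← bot_eq_zero, Iio_bot, sum_empty, sub_zero]
  refine le_of_sq_le_sq ?_ (norm_nonneg _)
  calc ((δ - 1 / 4) ^ (k : ℕ) * ‖b 0‖) ^ 2
      = ((δ - 1 / 4) ^ (k : ℕ)) ^ 2 * ‖b 0‖ ^ 2 := mul_pow _ _ _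
    _ ≤ (δ - 1 / 4) ^ (k : ℕ) * ‖b 0‖ ^ 2 := by
        gcongr
        exact pow_le_of_le_one (by positivity) hpow two_ne_zero
    _ ≤ ‖gramSchmidt ℝ b k‖ ^ 2 := by
        simpa [hzero] using hb.pow_mul_norm_sq_le hδ (Fin.zero_le k)

theorem abs_add_sum_le (hb : IsLLLReduced δ b) (hδ : 1 / 4 < δ) (hδ' : δ ≤ 5 / 4) (hb₀ : b 0 ≠ 0)
    {c : Fin M → ℝ} (hc : ‖∑ i, c i • b i‖ ≤ ‖b 0‖) (k : Fin M) :
    |c k + ∑ j ∈ Ioi k, c j * gramSchmidtCoeff ℝ b k j| ≤ ((δ - 1 / 4) ^ (k : ℕ))⁻¹ := by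
  set x := c k + ∑ j ∈ Ioi k, c j * gramSchmidtCoeff ℝ b k j
  have hpow : 0 < (δ - 1 / 4) ^ (k : ℕ) := pow_pos (sub_pos.mpr hδ) _
  rw [← one_div, le_div_iff₀ hpow]
  refine le_of_mul_le_mul_right ?_ (norm_pos_iff.mpr hb₀)
  calc |x| * (δ - 1 / 4) ^ (k : ℕ) * ‖b 0‖
      = |x| * ((δ - 1 / 4) ^ (k : ℕ) * ‖b 0‖) := mul_assoc _ _ _
    _ ≤ |x| * ‖gramSchmidt ℝ b k‖ := by
        gcongr
        exact hb.pow_mul_norm_zero_le hδ.le hδ' k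
    _ ≤ ‖∑ i, c i • b i‖ := norm_add_sum_mul_norm_gramSchmidt_le ℝ b c k
    _ ≤ 1 * ‖b 0‖ := by rwa [one_mul]

theorem abs_le_add_half_sum (hb : IsLLLReduced δ b) (hδ : 1 / 4 < δ) (hδ' : δ ≤ 5 / 4)
    (hb₀ : b 0 ≠ 0) {c : Fin M → ℝ} (hc : ‖∑ i, c i • b i‖ ≤ ‖b 0‖) (k : Fin M) :
    |c k| ≤ ((δ - 1 / 4) ^ (k : ℕ))⁻¹ + 1 / 2 * ∑ j ∈ Ioi k, |c j| := by
  have htail : |∑ j ∈ Ioi k, c j * gramSchmidtCoeff ℝ b k j| ≤ 1 / 2 * ∑ j ∈ Ioi k, |c j| := by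
    rw [mul_sum]
    refine (abs_sum_le_sum_abs _ _).trans (sum_le_sum fun j hj => ?_)
    rw [abs_mul, mul_comm]
    gcongr
    exact hb.abs_coeff_le j k (mem_Ioi.mp hj)
  calc |c k| ≤ |c k + ∑ j ∈ Ioi k, c j * gramSchmidtCoeff ℝ b k j|
        + |∑ j ∈ Ioi k, c j * gramSchmidtCoeff ℝ b k j| := by
        simpa only [Real.norm_eq_abs] using norm_le_add_norm_add (c k) _
    _ ≤ _ := add_le_add (hb.abs_add_sum_le hδ hδ' hb₀ hc k) htail

end IsLLLReduced

theorem shortest_vector_coefficient_bound_general [NeZero M] (hδ : 1 / 4 < δ) (hδ' : δ ≤ 5 / 4)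
    (hb : IsLLLReduced δ b) (hb₀ : b 0 ≠ 0) {α : ℕ → ℝ}
    (hα : ∀ i, α i = (δ - 1 / 4) ^ i + 1 / 2 * ∑ k ∈ range i, α k)
    {c : Fin M → ℝ} (hc : ‖∑ i, c i • b i‖ ≤ ‖b 0‖) (k : Fin M) :
    |c k| ≤ α k.rev * (δ - 1 / 4) ^ (1 - M : ℤ) := by
  have hβ : δ - 1 / 4 ≠ 0 := (sub_pos.mpr hδ).ne'
  have hpow (k : Fin M) :
      ((δ - 1 / 4) ^ (k : ℕ))⁻¹ = (δ - 1 / 4) ^ (k.rev : ℕ) * (δ - 1 / 4) ^ (1 - M : ℤ) := by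
    rw [← zpow_natCast, ← zpow_natCast, ← zpow_neg, ← zpow_add₀ hβ, Fin.val_rev]
    congr 1
    omega
  refine le_of_le_add_mul_sum_Ioi (y := fun k : Fin M => α k.rev * (δ - 1 / 4) ^ (1 - M : ℤ))
    one_half_pos.le (hb.abs_le_add_half_sum hδ hδ' hb₀ hc) (fun k => le_of_eq ?_) k
  rw [← sum_mul, sum_Ioi_val_rev, hpow, hα k.rev]
  ring

end LLL

/-- Theorem 1, coefficient form: For a δ-LLL-reduced basis
`b_1, …, b_m` of the full-rank lattice `L = {Σ c_i b_i : c_i ∈ ℤ} ⊆ ℝ^m`, the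
sequence `α_0 = 1`, `α_i = (δ − 1/4)^i + (1/2)·Σ_{k=0}^{i−1} α_k`, and a shortest
nonzero lattice vector `v_0 = Σ c_i b_i`, the coefficients satisfy
`|c_{m−i}| ≤ α_i·(δ − 1/4)^(1−m)` for all `i = 0, 1, …, m−1`. -/
theorem shortest_vector_coefficient_bound
    (M : ℕ) (hm : 1 ≤ M) (δ : ℝ) (hδ : 1/4 < δ ∧ δ < 1)
    (b bt : Fin M → EuclideanSpace ℝ (Fin M))
    (μ : Fin M → Fin M → ℝ)
    (hind : LinearIndependent ℝ b)
    (hμ : ∀ i j : Fin M, j < i → μ j i = ⟪b i, bt j⟫ / ⟪bt j, bt j⟫)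
    (hbt : ∀ i : Fin M, bt i = b i - ∑ j ∈ Finset.Iio i, μ j i • bt j)
    (hsize : ∀ i j : Fin M, j < i → |μ j i| ≤ 1/2)
    (hLovasz : ∀ (i : Fin M) (h : (i : ℕ) + 1 < M),
      ‖bt ⟨(i : ℕ) + 1, h⟩‖ ^ 2 ≥ (δ - (μ i ⟨(i : ℕ) + 1, h⟩) ^ 2) * ‖bt i‖ ^ 2)
    (α : ℕ → ℝ)
    (hα0 : α 0 = 1)
    (hα : ∀ i : ℕ, 1 ≤ i →
      α i = (δ - 1/4) ^ i + (1/2) * ∑ k ∈ Finset.range i, α k)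
    (L : Set (EuclideanSpace ℝ (Fin M)))
    (hL : L = {w | ∃ d : Fin M → ℤ, w = ∑ i, (d i : ℝ) • b i})
    (c : Fin M → ℤ) (v₀ : EuclideanSpace ℝ (Fin M))
    (hv₀ : v₀ = ∑ i, (c i : ℝ) • b i)
    (hv₀ne : v₀ ≠ 0)
    (hshort : ∀ w ∈ L, w ≠ 0 → ‖v₀‖ ≤ ‖w‖) :
    ∀ i : ℕ, ∀ h : i < M,
      |(c ⟨M - 1 - i, by omega⟩ : ℝ)| ≤ α i * (δ - 1/4) ^ ((1 : ℤ) - (M : ℤ)) := by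
  have : NeZero M := ⟨by omega⟩
  have hred : IsLLLReduced δ b := isLLLReduced_of_recurrence hμ hbt hsize hLovasz
  have hb₀L : b 0 ∈ L := hL ▸ ⟨Pi.single 0 1, by simp [Pi.single_apply]⟩
  have hb₀ : b 0 ≠ 0 := hind.ne_zero 0
  have hαrec (i : ℕ) : α i = (δ - 1 / 4) ^ i + 1 / 2 * ∑ k ∈ range i, α k := by
    rcases i.eq_zero_or_pos with rfl | hi
    · simp [hα0]
    · exact hα i hi
  intro i h
  have hrev : (Fin.rev ⟨M - 1 - i, by omega⟩ : Fin M) = ⟨i, h⟩ := by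
    ext
    simp only [Fin.val_rev]
    omega
  simpa only [hrev] using shortest_vector_coefficient_bound_general hδ.1 (by linarith) hred hb₀
    hαrec (hv₀ ▸ hshort (b 0) hb₀L hb₀) ⟨M - 1 - i, by omega⟩
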